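/- There exists an absolute constant C such that for every dimension d ≥ 1, every integer N ≥ 2 and every δ ∈ (0, 1/2), if X_1, …, X_N are i.i.d. uniformly distributed on [0,1]^d, then with probability at least 1−δ one has ρ(X_N, X) ≤ C √d ( log(1/δ) · log N / N )^{1/d}. -/

import Mathlib

open MeasureTheory

/-- The unit cube `[0,1]^d` in Euclidean space. -/
def unitCube (d : ℕ) : Set (EuclideanSpace ℝ (Fin d)) :=
  {y | ∀ i, y i ∈ Set.Icc (0 : ℝ) 1}

/-- The uniform distribution on `[0,1]^d` (normalized Lebesgue measure). -/
noncomputable def uniformCube (d : ℕ) : Measure (EuclideanSpace ℝ (Fin d)) :=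
  volume.restrict (unitCube d)

/-- The covering radius `ρ(X_N, X) = sup_{x ∈ [0,1]^d} min_{k ≤ N} ‖x - X_k‖`. -/
noncomputable def cubeCovRad (d : ℕ) {N : ℕ} (xs : Fin N → EuclideanSpace ℝ (Fin d)) : ℝ :=
  ⨆ x : unitCube d, ⨅ k : Fin N, dist (x : EuclideanSpace ℝ (Fin d)) (xs k)

def cubeCell (d m : ℕ) (c : Fin d → Fin m) : Set (EuclideanSpace ℝ (Fin d)) :=
  {y | ∀ i, y i ∈ Set.Icc (((c i : ℕ) : ℝ) / m) ((((c i : ℕ) : ℝ) + 1) / m)}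

lemma box_eq (d : ℕ) (a b : Fin d → ℝ) :
    {y : EuclideanSpace ℝ (Fin d) | ∀ i, y i ∈ Set.Icc (a i) (b i)}
      = (WithLp.ofLp : EuclideanSpace ℝ (Fin d) → (Fin d → ℝ)) ⁻¹' Set.Icc a b := by
  ext y
  simp [Set.mem_Icc, Pi.le_def, forall_and]

lemma box_meas (d : ℕ) (a b : Fin d → ℝ) :
    MeasurableSet {y : EuclideanSpace ℝ (Fin d) | ∀ i, y i ∈ Set.Icc (a i) (b i)} := by
  rw [box_eq]
  exact (PiLp.volume_preserving_ofLp (Fin d)).measurable measurableSet_Icc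

lemma box_vol (d : ℕ) (a b : Fin d → ℝ) :
    volume {y : EuclideanSpace ℝ (Fin d) | ∀ i, y i ∈ Set.Icc (a i) (b i)}
      = ∏ i, ENNReal.ofReal (b i - a i) := by
  rw [box_eq, (PiLp.volume_preserving_ofLp (Fin d)).measure_preimage
    measurableSet_Icc.nullMeasurableSet, Real.volume_Icc_pi]

instance uniformCube_prob (d : ℕ) : IsProbabilityMeasure (uniformCube d) := by
  constructor
  have := box_vol d (fun _ => 0) (fun _ => 1)
  simp only [uniformCube, Measure.restrict_apply_univ, unitCube]
  rw [this]; simp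

lemma cell_meas (d m : ℕ) (c : Fin d → Fin m) : MeasurableSet (cubeCell d m c) :=
  box_meas d _ _

lemma cell_sub (d m : ℕ) (c : Fin d → Fin m) : cubeCell d m c ⊆ unitCube d := by
  intro y hy i
  have h := hy i
  have hc : ((c i : ℕ) : ℝ) + 1 ≤ m := by exact_mod_cast (c i).2
  have hm : (0 : ℝ) < m := by
    have : (0 : ℝ) ≤ ((c i : ℕ) : ℝ) := by positivity
    linarith
  refine ⟨le_trans (by positivity) h.1, h.2.trans ?_⟩
  rw [div_le_one hm]; exact hc

lemma cell_vol (d m : ℕ) (c : Fin d → Fin m) :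
    uniformCube d (cubeCell d m c) = ENNReal.ofReal ((1 / (m : ℝ)) ^ d) := by
  rw [uniformCube, Measure.restrict_apply (cell_meas d m c),
    Set.inter_eq_left.2 (cell_sub d m c), cubeCell, box_vol]
  rw [ENNReal.ofReal_pow (by positivity)]
  rw [Finset.prod_congr rfl (g := fun _ => ENNReal.ofReal (1 / (m : ℝ)))]
  · simp
  · intro i _
    congr 1
    ring

lemma cov_le (d m N : ℕ) (hm : 1 ≤ m) (xs : Fin N → EuclideanSpace ℝ (Fin d))
    (h : ∀ c : Fin d → Fin m, ∃ k, xs k ∈ cubeCell d m c) :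
    cubeCovRad d xs ≤ Real.sqrt d * (1 / m) := by
  have hm0 : (0 : ℝ) < m := by exact_mod_cast hm
  apply Real.iSup_le _ (by positivity)
  rintro ⟨x, hx⟩
  have hcell : ∃ c : Fin d → Fin m, x ∈ cubeCell d m c := by
    have : ∀ i, ∃ j : Fin m, x i ∈ Set.Icc (((j : ℕ) : ℝ) / m) ((((j : ℕ) : ℝ) + 1) / m) := by
      intro i
      obtain ⟨h0, h1⟩ := hx i
      by_cases hlt : x i < 1
      · have hf : ⌊x i * m⌋₊ < m := by
          rw [Nat.floor_lt (by positivity)]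
          nlinarith
        refine ⟨⟨_, hf⟩, ?_, ?_⟩
        · rw [div_le_iff₀ hm0]
          exact Nat.floor_le (by positivity)
        · rw [le_div_iff₀ hm0]
          exact (Nat.lt_floor_add_one _).le
      · have hx1 : x i = 1 := le_antisymm h1 (not_lt.1 hlt)
        refine ⟨⟨m - 1, by omega⟩, ?_, ?_⟩
        · rw [div_le_iff₀ hm0, hx1, one_mul]
          exact_mod_cast Nat.sub_le m 1
        · rw [le_div_iff₀ hm0, hx1, one_mul]
          have : m ≤ m - 1 + 1 := by omega
          exact_mod_cast this
    choose c hc using this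
    exact ⟨c, hc⟩
  obtain ⟨c, hc⟩ := hcell
  obtain ⟨k, hk⟩ := h c
  refine (ciInf_le ⟨0, ?_⟩ k).trans ?_
  · rintro _ ⟨k, rfl⟩
    exact dist_nonneg
  · rw [EuclideanSpace.dist_eq]
    have hb : ∑ i, dist (x i) (xs k i) ^ 2 ≤ ∑ i : Fin d, (1 / (m : ℝ)) ^ 2 := by
      apply Finset.sum_le_sum
      intro i _
      apply pow_le_pow_left₀ dist_nonneg
      have := Real.dist_le_of_mem_Icc (hc i) (hk i)
      refine this.trans (le_of_eq ?_)
      ring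
    refine (Real.sqrt_le_sqrt hb).trans (le_of_eq ?_)
    rw [Finset.sum_const, Finset.card_univ, Fintype.card_fin, nsmul_eq_mul,
      Real.sqrt_mul (by positivity), Real.sqrt_sq (by positivity)]

lemma prob_bound (d m N : ℕ) (hm : 1 ≤ m) (δ r : ℝ) (hδ : 0 ≤ δ)
    (hr : Real.sqrt d * (1 / m) ≤ r)
    (hp : (m : ℝ) ^ d * (1 - (1 / (m : ℝ)) ^ d) ^ N ≤ δ) :
    ENNReal.ofReal (1 - δ) ≤
        (Measure.pi fun _ : Fin N => uniformCube d)
          {xs : Fin N → EuclideanSpace ℝ (Fin d) | cubeCovRad d xs ≤ r} := by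
  have hm0 : (0 : ℝ) < m := by exact_mod_cast hm
  have hq : (1 / (m : ℝ)) ^ d ≤ 1 := by
    apply pow_le_one₀ (by positivity)
    rw [div_le_one hm0]; exact_mod_cast hm
  set P := (Measure.pi fun _ : Fin N => uniformCube d) with hP
  let B : (Fin d → Fin m) → Set (Fin N → EuclideanSpace ℝ (Fin d)) :=
    fun c => Set.univ.pi fun _ => (cubeCell d m c)ᶜ
  have hBm : MeasurableSet (⋃ c, B c) :=
    MeasurableSet.iUnion fun c => MeasurableSet.univ_pi fun _ => (cell_meas d m c).compl
  have hB : ∀ c, P (B c) = ENNReal.ofReal ((1 - (1 / (m : ℝ)) ^ d) ^ N) := by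
    intro c
    rw [hP, Measure.pi_pi, Finset.prod_const, Finset.card_univ, Fintype.card_fin,
      prob_compl_eq_one_sub (cell_meas d m c), cell_vol, ENNReal.ofReal_pow (sub_nonneg.2 hq),
      ENNReal.ofReal_sub _ (by positivity), ENNReal.ofReal_one]
  have hU : P (⋃ c, B c) ≤ ENNReal.ofReal δ := by
    calc P (⋃ c, B c) ≤ ∑ c, P (B c) := measure_iUnion_fintype_le _ _
      _ = ENNReal.ofReal ((m : ℝ) ^ d * (1 - (1 / (m : ℝ)) ^ d) ^ N) := by
        simp only [hB, Finset.sum_const, Finset.card_univ, Fintype.card_pi, Fintype.card_fin,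
          Finset.prod_const, nsmul_eq_mul]
        rw [ENNReal.ofReal_mul (by positivity), ← Nat.cast_pow, ENNReal.ofReal_natCast]
      _ ≤ _ := ENNReal.ofReal_le_ofReal hp
  calc ENNReal.ofReal (1 - δ) = 1 - ENNReal.ofReal δ := by
        rw [ENNReal.ofReal_sub _ hδ, ENNReal.ofReal_one]
    _ ≤ 1 - P (⋃ c, B c) := tsub_le_tsub_left hU _
    _ = P (⋃ c, B c)ᶜ := (prob_compl_eq_one_sub hBm).symm
    _ ≤ _ := by
      apply measure_mono
      intro xs hxs
      refine (cov_le d m N hm xs ?_).trans hr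
      intro c
      by_contra hcon
      push Not at hcon
      exact hxs (Set.mem_iUnion.2 ⟨c, fun k _ => hcon k⟩)

/-- there is an absolute constant `C` such that for every `d ≥ 1`, `N ≥ 2`
and `δ ∈ (0,1/2)`, for i.i.d. uniform points on the cube, with probability at least
`1 - δ` one has `ρ(X_N,X) ≤ C √d (log(1/δ) log N / N)^{1/d}`. -/
theorem stmt_7 :
    ∃ C : ℝ, 0 < C ∧ ∀ (d N : ℕ), 1 ≤ d → 2 ≤ N → ∀ δ : ℝ, 0 < δ → δ < 1 / 2 →
      ENNReal.ofReal (1 - δ) ≤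
        (Measure.pi fun _ : Fin N => uniformCube d)
          {xs : Fin N → EuclideanSpace ℝ (Fin d) |
            cubeCovRad d xs ≤
              C * Real.sqrt d * (Real.log (1 / δ) * Real.log N / N) ^ (1 / (d : ℝ))} := by
  refine ⟨8, by norm_num, ?_⟩
  intro d N hd hN δ hδ hδ2
  have hN0 : (0 : ℝ) < N := by positivity
  set L := Real.log (1 / δ) with hL
  set a := Real.log N with ha
  have hl2 := Real.log_two_gt_d9
  have hLg : 0.69 < L := by
    have : Real.log 2 ≤ L := by
      apply Real.log_le_log (by norm_num)
      rw [le_div_iff₀ hδ]; linarith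
    linarith
  have hag : 0.69 < a := by
    have : Real.log 2 ≤ a := by
      apply Real.log_le_log (by norm_num)
      exact_mod_cast hN
    linarith
  have hδe : Real.exp (-L) = δ := by
    rw [hL, one_div, Real.log_inv, neg_neg, Real.exp_log hδ]
  have hNe : Real.exp a = N := Real.exp_log hN0
  have hLa : 0.47 < L * a := by nlinarith
  set t := L * a / N with ht
  have ht0 : 0 < t := by positivity
  set u := t ^ (1 / (d : ℝ)) with hu
  have hu0 : 0 < u := by positivity
  have hud : u ^ d = t := by
    rw [hu, one_div]; exact Real.rpow_inv_natCast_pow ht0.le (by omega)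
  set s := 8 * u with hs
  have hs0 : 0 < s := by positivity
  set m := ⌈1 / s⌉₊ with hmdef
  have hm : 1 ≤ m := Nat.ceil_pos.2 (by positivity)
  have hm0 : (0 : ℝ) < m := by exact_mod_cast hm
  have hms : 1 / s ≤ m := Nat.le_ceil _
  refine prob_bound d m N hm δ _ hδ.le ?_ ?_
  · have h1 : 1 / (m : ℝ) ≤ s := by
      rw [div_le_iff₀ hm0]
      rw [div_le_iff₀ hs0] at hms
      linarith
    calc Real.sqrt d * (1 / m) ≤ Real.sqrt d * s := by gcongr
      _ = _ := by rw [hs]; ring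
  · by_cases hm1 : m = 1
    · rw [hm1]
      have : N ≠ 0 := by omega
      simp [this, hδ.le]
    have hm2 : (2 : ℝ) ≤ m := by
      have : 2 ≤ m := by omega
      exact_mod_cast this
    have hlt : (m : ℝ) < 1 / s + 1 := Nat.ceil_lt_add_one (by positivity)
    have hm3 : 4 * u ≤ 1 / m := by
      rw [le_div_iff₀ hm0]
      have h2 : (m : ℝ) ≤ 2 * (1 / s) := by linarith
      calc 4 * u * m ≤ 4 * u * (2 * (1 / s)) := by gcongr
        _ = 1 := by rw [hs]; field_simp; norm_num
    have hq4 : 4 * t ≤ (1 / (m : ℝ)) ^ d := by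
      calc 4 * t ≤ 4 ^ d * t := by
            gcongr
            exact le_self_pow₀ (by norm_num) (by omega)
        _ = (4 * u) ^ d := by rw [mul_pow, hud]
        _ ≤ _ := by gcongr
    set q := (1 / (m : ℝ)) ^ d with hq
    have hmq : (m : ℝ) ^ d * q = 1 := by
      rw [hq, ← mul_pow]; field_simp; simp
    have hq1 : q ≤ 1 := by
      apply pow_le_one₀ (by positivity)
      rw [div_le_one hm0]; exact_mod_cast hm
    have htN : t * N = L * a := by rw [ht]; field_simp
    have hNq : 4 * (L * a) ≤ N * q := by
      rw [← htN]; nlinarith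
    have hM : (m : ℝ) ^ d ≤ N := by
      have h1 : 1 ≤ N * q := by linarith
      calc (m : ℝ) ^ d = (m : ℝ) ^ d * 1 := by ring
        _ ≤ (m : ℝ) ^ d * (N * q) := by gcongr
        _ = N * ((m : ℝ) ^ d * q) := by ring
        _ = N := by rw [hmq, mul_one]
    have hE : (1 - q) ^ N ≤ Real.exp (-(4 * (L * a))) := by
      calc (1 - q) ^ N ≤ (Real.exp (-q)) ^ N := by
            apply pow_le_pow_left₀ (by linarith)
            exact Real.one_sub_le_exp_neg q
        _ = Real.exp (N * (-q)) := by rw [Real.exp_nat_mul]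
        _ ≤ _ := by
            apply Real.exp_le_exp.2
            linarith
    calc (m : ℝ) ^ d * (1 - q) ^ N ≤ N * Real.exp (-(4 * (L * a))) := by
          apply mul_le_mul hM hE (pow_nonneg (by linarith) _) hN0.le
      _ = Real.exp (a + -(4 * (L * a))) := by rw [Real.exp_add, hNe]
      _ ≤ Real.exp (-L) := by
          apply Real.exp_le_exp.2
          nlinarith
      _ = δ := hδe
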